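/- Let X = [x_0, …, x_k] be k+1 unit vectors in ℝ^(n+1), pairwise non-antipodal, viewed as points of S^n. The points are affinely independent on the sphere (i.e., for each i, the vectors {log_{x_i}(x_j)}_{j≠i} are linearly independent in T_{x_i}S^n) if and only if the matrix X has rank k+1. -/

import Mathlib

open scoped RealInnerProductSpace

/-- The spherical Riemannian log `log_x(y) = (θ/sinθ)(y - cosθ • x)`,
`θ = arccos ⟪x,y⟫`. -/
noncomputable def sphLog {n : ℕ} (x y : EuclideanSpace ℝ (Fin (n + 1))) :
    EuclideanSpace ℝ (Fin (n + 1)) :=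
  (Real.arccos ⟪x, y⟫ / Real.sin (Real.arccos ⟪x, y⟫)) •
    (y - Real.cos (Real.arccos ⟪x, y⟫) • x)

theorem sphLog_eq_aux {n : ℕ} (x y : EuclideanSpace ℝ (Fin (n + 1)))
    (hx : ‖x‖ = 1) (hy : ‖y‖ = 1) (h1 : y ≠ x) (h2 : y ≠ -x) :
    ∃ c : ℝ, c ≠ 0 ∧ sphLog x y = c • (y - ⟪x, y⟫ • x) := by
  have hle : ⟪x, y⟫ < 1 := by
    refine lt_of_le_of_ne ?_ ?_
    · simpa [hx, hy] using real_inner_le_norm x y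
    · intro h
      exact h1 ((inner_eq_one_iff_of_norm_eq_one hx hy).1 h).symm
  have hge : -1 < ⟪x, y⟫ := by
    have hne : ⟪x, -y⟫ ≠ 1 := by
      intro h
      have := (inner_eq_one_iff_of_norm_eq_one hx (by simpa using hy)).1 h
      exact h2 (by rw [this, neg_neg])
    have hl : ⟪x, -y⟫ ≤ 1 := by simpa [hx, hy] using real_inner_le_norm x (-y)
    have := lt_of_le_of_ne hl hne
    rw [inner_neg_right] at this
    linarith
  refine ⟨Real.arccos ⟪x, y⟫ / Real.sin (Real.arccos ⟪x, y⟫), ?_, ?_⟩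
  · have hpos : 0 < Real.arccos ⟪x, y⟫ := Real.arccos_pos.2 hle
    have hlt : Real.arccos ⟪x, y⟫ < Real.pi := by
      refine lt_of_le_of_ne (Real.arccos_le_pi _) ?_
      intro h
      have := Real.arccos_eq_pi.1 h
      linarith
    exact (div_pos hpos (Real.sin_pos_of_pos_of_lt_pi hpos hlt)).ne'
  · rw [sphLog, Real.cos_arccos hge.le hle.le]

/-- `k+1` pairwise non-identical and non-antipodal unit vectors on `S^n` are
affinely independent (for each `i` the tangent vectors `log_{x_i}(x_j)`, `j ≠ i`,
are linearly independent) iff the matrix `X = [x_0, …, x_k]` has rank `k+1`,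
i.e. iff the `x_i` are linearly independent. -/
theorem stmt7 {n k : ℕ} (x : Fin (k + 1) → EuclideanSpace ℝ (Fin (n + 1)))
    (hunit : ∀ i, ‖x i‖ = 1)
    (hdist : ∀ i j, i ≠ j → x j ≠ x i ∧ x j ≠ -x i) :
    (∀ i : Fin (k + 1),
        LinearIndependent ℝ (fun j : {j : Fin (k + 1) // j ≠ i} => sphLog (x i) (x j)))
      ↔ LinearIndependent ℝ x := by
  have key : ∀ i : Fin (k + 1),
      LinearIndependent ℝ (fun j : {j : Fin (k + 1) // j ≠ i} => sphLog (x i) (x j)) ↔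
      LinearIndependent ℝ x := by
    intro i
    have hc : ∀ j : {j : Fin (k + 1) // j ≠ i}, ∃ c : ℝ, c ≠ 0 ∧
        sphLog (x i) (x j) = c • (x j - ⟪x i, x j⟫ • x i) := fun j =>
      sphLog_eq_aux _ _ (hunit _) (hunit _) (hdist i j j.2.symm).1 (hdist i j j.2.symm).2
    choose c hc0 hc using hc
    have hii : ⟪x i, x i⟫ = 1 := by simp [hunit]
    have hsplit : ∀ {M : Type} [AddCommGroup M] (f : Fin (k + 1) → M),
        ∑ j, f j = f i + ∑ j : {j : Fin (k + 1) // j ≠ i}, f j := by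
      intro M _ f
      exact Fintype.sum_eq_add_sum_subtype_ne f i
    rw [Fintype.linearIndependent_iff, Fintype.linearIndependent_iff]
    constructor
    · intro H g hg
      have h1 : g i + ∑ j : {j : Fin (k + 1) // j ≠ i}, g j * ⟪x i, x j⟫ = 0 := by
        have := congrArg (fun v => ⟪x i, v⟫) hg
        simp only [inner_sum, inner_smul_right, inner_zero_right] at this
        rw [hsplit, hii, mul_one] at this
        exact this
      rw [hsplit] at hg
      have h2 := H (fun j => g j * (c j)⁻¹) (by
        simp only [hc, smul_smul]
        have : ∀ j : {j : Fin (k + 1) // j ≠ i},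
            (g j * (c j)⁻¹ * c j) • (x j - ⟪x i, x j⟫ • x i)
              = g j • x j - (g j * ⟪x i, x j⟫) • x i := by
          intro j
          rw [inv_mul_cancel_right₀ (hc0 j), smul_sub, smul_smul]
        simp only [this]
        rw [Finset.sum_sub_distrib, ← Finset.sum_smul,
          eq_neg_of_add_eq_zero_right h1, eq_neg_of_add_eq_zero_right hg]
        simp)
      have h3 : ∀ j : {j : Fin (k + 1) // j ≠ i}, g j = 0 := fun j =>
        (mul_eq_zero.1 (h2 j)).resolve_right (inv_ne_zero (hc0 j))
      intro j
      by_cases hj : j = i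
      · subst hj
        simpa [h3] using h1
      · exact h3 ⟨j, hj⟩
    · intro H g hg j
      have h2 := H (fun j => if h : j = i then
          -∑ j : {j : Fin (k + 1) // j ≠ i}, g j * c j * ⟪x i, x j⟫
          else g ⟨j, h⟩ * c ⟨j, h⟩) (by
        rw [hsplit]
        have : ∀ j : {j : Fin (k + 1) // j ≠ i}, g j • sphLog (x i) (x j)
              = (g j * c j) • x j - (g j * c j * ⟪x i, x j⟫) • x i := by
          intro j
          rw [hc, smul_smul, smul_sub, smul_smul]
        simp only [this] at hg
        rw [Finset.sum_sub_distrib, ← Finset.sum_smul, sub_eq_zero] at hg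
        have h4 : ∀ j : {j : Fin (k + 1) // j ≠ i}, (j : Fin (k + 1)) ≠ i := fun j => j.2
        simp only [h4, dite_true, dite_false, Subtype.coe_eta, neg_smul]
        rw [hg]
        simp) j
      simp only [j.2, dite_false, Subtype.coe_eta] at h2
      exact (mul_eq_zero.1 h2).resolve_right (hc0 j)
  exact ⟨fun H => (key 0).1 (H 0), fun H i => (key i).2 H⟩
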